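/- For every integer n > 8750, the number of nice words of length n satisfies |N_n| > 1.01^n / 7.8. -/

import Mathlib

/-- A word is *square-free* if it contains no factor of the form `u ++ u`
with `u` nonempty. -/
def SqFree {α : Type*} (w : List α) : Prop :=
  ∀ u : List α, u ≠ [] → ¬ (u ++ u) <:+: w

/-- The word `p̂ = 1202120121021201021`. -/
def phat : List (Fin 3) := [1,2,0,2,1,2,0,1,2,1,0,2,1,2,0,1,0,2,1]

/-- The palindrome `p = mirror(p̂) ++ 0 ++ p̂`. -/
def pal : List (Fin 3) := phat.reverse ++ 0 :: phat

/-- The number of occurrences of a (nonempty) word `u` as a factor of `v`. -/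
def occCount (u v : List (Fin 3)) : ℕ :=
  (List.range v.length).countP (fun i => (v.drop i).take u.length == u)

/-- A word `v` is *nice* if `p v p` is square-free and contains exactly two
occurrences of `p̂` and exactly two occurrences of its mirror image. -/
def IsNice (v : List (Fin 3)) : Prop :=
  SqFree (pal ++ v ++ pal) ∧ occCount phat (pal ++ v ++ pal) = 2 ∧
    occCount phat.reverse (pal ++ v ++ pal) = 2

/-- `lword n` is the lexicographically least nice word of length `n`
(the empty word if no nice word of length `n` exists). -/
noncomputable def lword (n : ℕ) : List (Fin 3) := by
  classical
  exact if h : {w : List (Fin 3) | IsNice w ∧ w.length = n}.Nonempty then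
    Set.IsWF.min
      (Set.Finite.isWF
        ((List.finite_length_eq (Fin 3) n).subset (fun _ hw => hw.2))) h
  else []

/-- A set of words is *mirror-free* if it does not contain both a word and its
(distinct) mirror image. -/
def MirrorFree (S : Set (List (Fin 3))) : Prop :=
  ∀ w ∈ S, w ≠ w.reverse → w.reverse ∉ S

/-- `S` is an `n`-good set: a mirror-free set of nice words of length `n` such that
for all `i ∈ {2n+100, …, 7n}` and all distinct `u v ∈ S`, the words
`p u p v p lᵢ`, `p ū p v p lᵢ`, `p u p v̄ p l̄ᵢ` and `p ū p v̄ p l̄ᵢ` are square-free. -/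
def GoodSet (n : ℕ) (S : Set (List (Fin 3))) : Prop :=
  (∀ w ∈ S, IsNice w ∧ w.length = n) ∧ MirrorFree S ∧
    ∀ i : ℕ, 2 * n + 100 ≤ i → i ≤ 7 * n → ∀ u ∈ S, ∀ v ∈ S, u ≠ v →
      SqFree (pal ++ u ++ pal ++ v ++ pal ++ lword i) ∧
      SqFree (pal ++ u.reverse ++ pal ++ v ++ pal ++ lword i) ∧
      SqFree (pal ++ u ++ pal ++ v.reverse ++ pal ++ (lword i).reverse) ∧
      SqFree (pal ++ u.reverse ++ pal ++ v.reverse ++ pal ++ (lword i).reverse)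

/-- `mirrorIf r w` is the mirror image of `w` if `r = true`, and `w` itself otherwise. -/
def mirrorIf (r : Bool) (w : List (Fin 3)) : List (Fin 3) :=
  if r then w.reverse else w

/-- The nondeterministic substitution `h`. -/
def himg : Fin 3 → Set (List (Fin 3)) :=
  ![{[0,1,2,1,0,2,1,2,0,2,1,0,2,0,1,0,2,1,2,0,1,2,1,0],
     [0,1,2,1,0,2,1,2,0,2,1,0,2,0,1,2,0,2,1,2,0,1,2,1,0]},
    {[1,2,0,2,1,0,2,0,1,0,2,1,0,1,2,1,0,2,0,1,2,0,2,1],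
     [1,2,0,2,1,0,2,0,1,0,2,1,0,1,2,0,1,0,2,0,1,2,0,2,1]},
    {[2,0,1,0,2,1,0,1,2,1,0,2,1,2,0,2,1,0,1,2,0,1,0,2],
     [2,0,1,0,2,1,0,1,2,1,0,2,1,2,0,1,2,1,0,1,2,0,1,0,2]}]

/-- `v` is an image of `w` under the substitution `h`: `v` is obtained by replacing
each letter `c` of `w` by some word of `himg c`. -/
def IsImage (w v : List (Fin 3)) : Prop :=
  ∃ vs : List (List (Fin 3)), List.Forall₂ (fun c u => u ∈ himg c) w vs ∧ v = vs.flatten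

/-!
Code each letter of a square-free word by one of its two images under `h`, which have 24 and 25
letters, and code a sentinel placed before and after the word by `p`. The first 19 letters of a code
word serve as a marker: they occur in a concatenation of code words only where that code word
starts. A square in the coded word that contains no marker lies within three consecutive code words,
where a finite check excludes it. In a square that contains a marker both halves are cut into code
words in the same way, so the word of letters contains a square as well. Since moreover `p̂` and its
mirror image occur only in the codes of the sentinels, coded words are nice.

A square-free word of length `l` that starts and ends with `0` thus yields `l.choose k` nice words
of length `24 * l + k`, and iterating the substitution provides such words of nearly every length.
With `l` close to `2 * n / 49` this gives at least `2 ^ (n / 49 - 50)` nice words of length `n`, and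
`1.01 ^ 49 < 2`.
-/

/-! ### Square-free words -/

namespace SqFree

variable {α β : Type*}

theorem of_infix {v w : List α} (hw : SqFree w) (hv : v <:+: w) : SqFree v :=
  fun u hu huv => hw u hu (huv.trans hv)

theorem map {f : α → β} (hf : Function.Injective f) {w : List α} (hw : SqFree w) :
    SqFree (w.map f) := by
  rintro u hu huw
  obtain ⟨l, hl, hlu⟩ := List.infix_map_iff.1 huw
  obtain ⟨a, b, rfl, ha, hb⟩ := List.map_eq_append_iff.1 hlu.symm
  obtain rfl : a = b := hf.list_map (ha.trans hb.symm)
  exact hw a (by rintro rfl; exact hu ha.symm) hl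

theorem singleton (x : α) : SqFree [x] := by
  intro u hu h
  have hle := h.length_le
  have hpos := List.length_pos_of_ne_nil hu
  rw [List.length_append, List.length_singleton] at hle
  omega

theorem isChain_ne {w : List α} (hw : SqFree w) : w.IsChain (· ≠ ·) := by
  refine List.isChain_iff_forall_rel_of_append_cons_cons.2 fun {a b l₁ l₂} h hab => ?_
  exact hw [a] (by simp) ⟨l₁, l₂, by simp [h, hab]⟩

theorem cons_concat {x : α} {w : List α} (hw : SqFree w) (hne : w ≠ []) (hx : x ∉ w) :
    SqFree (x :: w ++ [x]) := by
  intro u hu huw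
  rw [List.cons_append, List.infix_cons_iff, List.infix_concat_iff] at huw
  rcases huw with hprefix | hsuffix | hinfix
  · obtain ⟨y, u', rfl⟩ := List.exists_cons_of_ne_nil hu
    rw [List.cons_append, List.cons_prefix_cons] at hprefix
    obtain ⟨rfl, hu'⟩ := hprefix
    rcases List.prefix_concat_iff.1 hu' with heq | hpre
    · rcases List.eq_nil_or_concat' u' with rfl | ⟨u'', z, rfl⟩
      · exact hne (by simpa using heq.symm)
      · rw [← List.cons_append, ← List.append_assoc] at heq
        exact hx (by simp [← (List.append_inj' heq rfl).1])
    · exact hx (hpre.subset (by simp))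
  · obtain ⟨u', y, rfl⟩ := (List.eq_nil_or_concat' u).resolve_left hu
    obtain h | ⟨t, ht, htw⟩ := List.suffix_concat_iff.1 hsuffix
    · simp at h
    · rw [← List.append_assoc] at ht
      obtain ⟨rfl, hyx⟩ := List.append_inj' ht rfl
      exact hx (htw.subset (by simp_all))
  · exact hw u hu hinfix

theorem length_le_three {w : List (Fin 3)} (hw : SqFree w) (h0 : 0 ∉ w) : w.length ≤ 3 := by
  by_contra! hlen
  match w, hlen, hw.isChain_ne with
  | a :: b :: c :: d :: w, _, hne =>
    obtain ⟨rfl, rfl⟩ : a = c ∧ b = d := by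
      simp only [List.mem_cons, not_or, List.isChain_cons_cons] at h0 hne
      omega
    exact hw [a, b] (by simp) ⟨[], w, by simp⟩

end SqFree

/-- The number whose base-3 digits, least significant first, are the letters of `w`. It makes finite
checks feasible: the kernel handles arithmetic much faster than comparisons of lists. -/
def wordNum (w : List (Fin 3)) : ℕ := Nat.ofDigits 3 (w.map Fin.val)

/-- Decides that no `u ++ u` with `0 < u.length ≤ k` is a prefix of the word with `wordNum` equal
to `N`. -/
def noSquarePrefix (N : ℕ) : ℕ → Bool
  | 0 => true
  | k + 1 => !Nat.beq (N % 3 ^ (k + 1)) (N / 3 ^ (k + 1) % 3 ^ (k + 1)) && noSquarePrefix N k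

/-- Decides that no square in `v ++ w` starts inside `v`. -/
def noSquareStart : List (Fin 3) → List (Fin 3) → Bool
  | [], _ => true
  | x :: v, w =>
    noSquarePrefix (wordNum (x :: (v ++ w))) (((v ++ w).length + 1) / 2) && noSquareStart v w

theorem wordNum_append (u v : List (Fin 3)) :
    wordNum (u ++ v) = wordNum u + 3 ^ u.length * wordNum v := by
  simp only [wordNum, List.map_append, Nat.ofDigits_append, List.length_map]

theorem wordNum_lt (u : List (Fin 3)) : wordNum u < 3 ^ u.length := by
  simpa [wordNum] using Nat.ofDigits_lt_base_pow_length (b := 3) (l := u.map Fin.val) (by simp)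
    (by simp +contextual)

theorem not_prefix_of_noSquarePrefix {w u : List (Fin 3)} {k : ℕ}
    (h : noSquarePrefix (wordNum w) k) (hu : u ≠ []) (huk : u.length ≤ k) : ¬ u ++ u <+: w := by
  induction k with
  | zero => exact absurd (List.length_eq_zero_iff.1 (by omega)) hu
  | succ k ih =>
    simp only [noSquarePrefix, Bool.and_eq_true, Bool.not_eq_true', ← Bool.not_eq_true,
      Nat.beq_eq] at h
    rcases Nat.lt_or_eq_of_le huk with hlt | hk
    · exact ih h.2 (by omega)
    · rintro ⟨z, rfl⟩
      refine h.1 ?_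
      rw [← hk, List.append_assoc, wordNum_append, wordNum_append, Nat.add_mul_mod_self_left,
        Nat.add_mul_div_left _ _ (by positivity), Nat.div_eq_of_lt (wordNum_lt u), zero_add,
        Nat.add_mul_mod_self_left]

theorem SqFree.append_of_noSquareStart {v w : List (Fin 3)} (h : noSquareStart v w)
    (hw : SqFree w) : SqFree (v ++ w) := by
  induction v with
  | nil => exact hw
  | cons x v ih =>
    simp only [noSquareStart, Bool.and_eq_true] at h
    intro u hu huw
    rw [List.cons_append] at huw
    rcases List.infix_cons_iff.1 huw with hpre | hin
    · refine not_prefix_of_noSquarePrefix h.1 hu ?_ hpre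
      have := hpre.length_le
      simp only [List.length_append, List.length_cons] at this ⊢
      omega
    · exact ih h.2 u hu hin

/-! ### Codes and synchronization -/

section FlatMap

variable {ι α : Type*} {σ : ι → List α}

theorem exists_split_of_flatMap_eq_append {t : List ι} (ht : t ≠ []) {X Y : List α}
    (h : t.flatMap σ = X ++ Y) :
    ∃ t₁ d t₂ a b, t = t₁ ++ d :: t₂ ∧ σ d = a ++ b ∧ X = t₁.flatMap σ ++ a ∧
      Y = b ++ t₂.flatMap σ := by
  induction t generalizing X with
  | nil => exact absurd rfl ht
  | cons d t ih =>
    rw [List.flatMap_cons] at h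
    rcases List.append_eq_append_iff.1 h with ⟨b, rfl, hb⟩ | ⟨b, hd, rfl⟩
    · rcases eq_or_ne t [] with rfl | ht'
      · obtain ⟨rfl, rfl⟩ : b = [] ∧ Y = [] := by simpa using hb.symm
        exact ⟨[], d, [], σ d, [], by simp⟩
      · obtain ⟨t₁, e, t₂, a, c, rfl, he, rfl, hY⟩ := ih ht' hb
        exact ⟨d :: t₁, e, t₂, a, c, by simp, he, by simp, hY⟩
    · exact ⟨[], d, t, X, b, by simp [hd]⟩

/-- A prefix code without the empty word: the code words `σ d` are nonempty, and no code word is a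
prefix of another. -/
def IsPrefixCode (σ : ι → List α) : Prop :=
  (∀ d, σ d ≠ []) ∧ ∀ d e, σ d <+: σ e → d = e

namespace IsPrefixCode

theorem exists_append_of_prefix (hσ : IsPrefixCode σ) {z r : List ι} {p : List α}
    (h : z.flatMap σ ++ p <+: r.flatMap σ) : ∃ r', r = z ++ r' ∧ p <+: r'.flatMap σ := by
  induction z generalizing r with
  | nil => exact ⟨r, rfl, h⟩
  | cons d z ih =>
    rw [List.flatMap_cons, List.append_assoc] at h
    cases r with
    | nil => simp [hσ.1 d] at h
    | cons e r =>
      rw [List.flatMap_cons] at h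
      obtain rfl : d = e := by
        rcases List.prefix_or_prefix_of_prefix ((List.prefix_append _ _).trans h)
          (List.prefix_append _ _) with hde | hed
        · exact hσ.2 d e hde
        · exact (hσ.2 e d hed).symm
      obtain ⟨r', rfl, hr'⟩ := ih ((List.prefix_append_right_inj _).1 h)
      exact ⟨r', rfl, hr'⟩

theorem exists_cons_of_prefix (hσ : IsPrefixCode σ) {a : List α} (ha : a ≠ []) {d : ι}
    (had : a <+: σ d) {r : List ι} (h : a <+: r.flatMap σ) :
    ∃ f r', r = f :: r' ∧ a <+: σ f := by
  cases r with
  | nil => simp [ha] at h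
  | cons f r =>
    refine ⟨f, r, rfl, ?_⟩
    rw [List.flatMap_cons] at h
    rcases List.prefix_or_prefix_of_prefix h (List.prefix_append _ _) with hf | hf
    · exact hf
    · exact hσ.2 f d (hf.trans had) ▸ had

theorem flatMap_injective (hσ : IsPrefixCode σ) :
    Function.Injective fun t : List ι => t.flatMap σ := by
  have prefix_of_eq {z r : List ι} (h : z.flatMap σ = r.flatMap σ) : z <+: r := by
    have hzr : z.flatMap σ ++ [] <+: r.flatMap σ := by rw [List.append_nil, h]
    obtain ⟨r', rfl, -⟩ := hσ.exists_append_of_prefix hzr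
    exact List.prefix_append _ _
  exact fun z r h => antisymm (prefix_of_eq h) (prefix_of_eq h.symm)

end IsPrefixCode

/-- A suffix code, encoded as the prefix code of the reversed code words. -/
def IsSuffixCode (σ : ι → List α) : Prop :=
  IsPrefixCode fun d => (σ d).reverse

namespace IsSuffixCode

theorem exists_append_of_suffix (hσ : IsSuffixCode σ) {z r : List ι} {p : List α}
    (h : p ++ z.flatMap σ <:+ r.flatMap σ) : ∃ r', r = r' ++ z ∧ p <:+ r'.flatMap σ := by
  rw [← List.reverse_prefix, List.reverse_append, List.reverse_flatMap, List.reverse_flatMap] at h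
  obtain ⟨r', hr, hr'⟩ := IsPrefixCode.exists_append_of_prefix hσ h
  refine ⟨r'.reverse, by simpa using congrArg List.reverse hr, ?_⟩
  rw [← List.reverse_prefix, List.reverse_flatMap, List.reverse_reverse]
  exact hr'

theorem exists_concat_of_suffix (hσ : IsSuffixCode σ) {b : List α} (hb : b ≠ []) {d : ι}
    (hbd : b <:+ σ d) {r : List ι} (h : b <:+ r.flatMap σ) :
    ∃ f r', r = r' ++ [f] ∧ b <:+ σ f := by
  rw [← List.reverse_prefix, List.reverse_flatMap] at h
  obtain ⟨f, r', hr, hf⟩ := IsPrefixCode.exists_cons_of_prefix hσ (List.reverse_ne_nil_iff.2 hb)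
    (List.reverse_prefix.2 hbd) h
  exact ⟨f, r'.reverse, by simpa using congrArg List.reverse hr, List.reverse_prefix.1 hf⟩

end IsSuffixCode

end FlatMap

section Synchronization

variable {ι α : Type*} {σ : ι → List α} {R : ι → ι → Prop}

/-- In a concatenation of code words following `R`, the word `q` starts only at offset `k` of a code
word `σ i`. The condition looks at two consecutive code words; this suffices when `q` is no longer
than any code word. -/
def OccursOnlyAt (σ : ι → List α) (R : ι → ι → Prop) (q : List α) (k : ℕ) (i : ι) : Prop :=
  ∀ d e, R d e → ∀ o < (σ d).length, q <+: (σ d ++ σ e).drop o → o = k ∧ d = i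

theorem exists_rel_flatMap_prefix (hR : ∀ d, ∃ e, R d e) {d : ι} {t : List ι}
    (ht : (d :: t).IsChain R) : ∃ e W, R d e ∧ t.flatMap σ <+: σ e ++ W := by
  cases t with
  | nil => exact (hR d).imp fun e he => ⟨[], he, by simp⟩
  | cons e t => exact ⟨e, t.flatMap σ, (List.isChain_cons_cons.1 ht).1, by simp⟩

theorem exists_rel_rel_flatMap_prefix (hR : ∀ d, ∃ e, R d e) {d : ι} {t : List ι}
    (ht : (d :: t).IsChain R) :
    ∃ e f W, R d e ∧ R e f ∧ t.flatMap σ <+: σ e ++ σ f ++ W := by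
  cases t with
  | nil =>
    obtain ⟨e, he⟩ := hR d
    obtain ⟨f, hf⟩ := hR e
    exact ⟨e, f, [], he, hf, by simp⟩
  | cons e t =>
    rw [List.isChain_cons_cons] at ht
    obtain ⟨f, W, hf, hW⟩ := exists_rel_flatMap_prefix (σ := σ) hR ht.2
    refine ⟨e, f, W, ht.1, hf, ?_⟩
    rwa [List.flatMap_cons, List.append_assoc, List.prefix_append_right_inj]

namespace OccursOnlyAt

variable {q : List α} {k : ℕ} {i : ι}

theorem eq_of_prefix_drop (hq : OccursOnlyAt σ R q k i) (hR : ∀ d, ∃ e, R d e)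
    (hlen : ∀ d, q.length ≤ (σ d).length) {d : ι} {t : List ι} (ht : (d :: t).IsChain R) {o : ℕ}
    (ho : o < (σ d).length) (h : q <+: (σ d ++ t.flatMap σ).drop o) : o = k ∧ d = i := by
  obtain ⟨e, W, he, hW⟩ := exists_rel_flatMap_prefix (σ := σ) hR ht
  refine hq d e he o ho (List.prefix_of_prefix_length_le
    (l₃ := (σ d ++ σ e ++ W).drop o) (h.trans ?_) ?_ ?_)
  · rw [List.append_assoc]
    exact ((List.prefix_append_right_inj _).2 hW).drop o
  · exact (List.prefix_append _ _).drop o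
  · have := hlen e
    simp only [List.length_drop, List.length_append]
    omega

theorem exists_eq_append (hq : OccursOnlyAt σ R q k i) (hR : ∀ d, ∃ e, R d e)
    (hlen : ∀ d, q.length ≤ (σ d).length) (hne : q ≠ []) {t : List ι} (ht : t.IsChain R)
    {X Y : List α} (h : t.flatMap σ = X ++ (q ++ Y)) :
    ∃ t₁ t₂, t = t₁ ++ i :: t₂ ∧ X = t₁.flatMap σ ++ (σ i).take k := by
  induction t generalizing X with
  | nil => simp [hne] at h
  | cons d t ih =>
    rw [List.flatMap_cons] at h
    by_cases hX : X.length < (σ d).length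
    · have hdrop : (σ d ++ t.flatMap σ).drop X.length = q ++ Y := by rw [h, List.drop_left]
      obtain ⟨rfl, rfl⟩ := hq.eq_of_prefix_drop hR hlen ht hX (hdrop ▸ List.prefix_append _ _)
      refine ⟨[], t, rfl, ?_⟩
      have := congrArg (List.take X.length) h
      rwa [List.take_left, List.take_append_of_le_length hX.le, eq_comm] at this
    · obtain ⟨X', rfl⟩ : σ d <+: X := List.prefix_of_prefix_length_le (List.prefix_append _ _)
        (h.symm ▸ List.prefix_append _ _) (not_lt.1 hX)
      rw [List.append_assoc, List.append_cancel_left_eq] at h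
      obtain ⟨t₁, t₂, rfl, rfl⟩ := ih ht.tail h
      exact ⟨d :: t₁, t₂, rfl, by simp⟩

end OccursOnlyAt

theorem occCount_append (q v w : List (Fin 3)) :
    occCount q (v ++ w) =
      (List.range v.length).countP (fun o => ((v ++ w).drop o).take q.length == q) +
        occCount q w := by
  rw [occCount, List.length_append, List.range_add, List.countP_append, List.countP_map, occCount]
  simp only [Function.comp_def, List.drop_length_add_append]

theorem occCount_flatMap [BEq ι] [LawfulBEq ι] {σ : ι → List (Fin 3)} {q : List (Fin 3)}
    {k : ℕ} {i : ι} (hq : OccursOnlyAt σ R q k i) (hR : ∀ d, ∃ e, R d e)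
    (hlen : ∀ d, q.length ≤ (σ d).length) (hk : k < (σ i).length) (hi : q <+: (σ i).drop k)
    {t : List ι} (ht : t.IsChain R) :
    occCount q (t.flatMap σ) = t.count i := by
  induction t with
  | nil => rfl
  | cons d t ih =>
    have hfirst : (List.range (σ d).length).countP
        (fun o => ((σ d ++ t.flatMap σ).drop o).take q.length == q) =
          if d == i then 1 else 0 := by
      split_ifs with hd <;> rw [beq_iff_eq] at hd
      · subst hd
        rw [← List.count_eq_one_of_mem List.nodup_range (List.mem_range.2 hk)]
        refine List.countP_congr fun o ho => ?_
        rw [beq_iff_eq, beq_iff_eq, eq_comm, ← List.prefix_iff_eq_take]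
        refine ⟨fun h => (hq.eq_of_prefix_drop hR hlen ht (List.mem_range.1 ho) h).1, ?_⟩
        rintro rfl
        exact hi.trans ((List.prefix_append _ _).drop o)
      · refine List.countP_eq_zero.2 fun o ho h => hd ?_
        rw [beq_iff_eq, eq_comm, ← List.prefix_iff_eq_take] at h
        exact (hq.eq_of_prefix_drop hR hlen ht (List.mem_range.1 ho) h).2
    rw [List.flatMap_cons, occCount_append, hfirst, ih ht.tail, List.count_cons, add_comm]

end Synchronization

theorem take_infix_of_prefix_append {α : Type*} {u b c W : List α} {m : ℕ}
    (h : u <+: b ++ (c ++ W)) (hm : b.length + m ≤ u.length) : c.take m <:+: u := by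
  have : b ++ c.take m <+: u := by
    refine List.prefix_of_prefix_length_le ((List.prefix_append_right_inj b).2 ?_) h ?_
    · exact (List.take_prefix m c).trans (List.prefix_append c W)
    · rw [List.length_append]
      exact (Nat.add_le_add_left (List.length_take_le m c) _).trans hm
  exact (List.suffix_append _ _).isInfix.trans this.isInfix

/-- Conditions on code words `σ d` for letters `ℓ d` under which a sequence of code words following
`R` is square-free as soon as the sequence of its letters is. The first `m` letters of a code word
are a marker of its beginning, and `letter_eq` is a variant of the notion of a ps-code. For finitely
many code words all conditions can be checked by computation. -/
structure IsSquareFreeCode {ι α L : Type*} (σ : ι → List α) (R : ι → ι → Prop) (ℓ : ι → L) (m : ℕ) :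
    Prop where
  exists_rel : ∀ d, ∃ e, R d e
  pos : 0 < m
  le_length : ∀ d, m ≤ (σ d).length
  marker : ∀ d, OccursOnlyAt σ R ((σ d).take m) 0 d
  letter_eq : ∀ d f f' a b, σ d = a ++ b → a <+: σ f → b <:+ σ f' → ℓ d = ℓ f ∨ ℓ d = ℓ f'
  sqFree : ∀ d e f, R d e → R e f → SqFree (σ d ++ σ e ++ σ f)

namespace IsSquareFreeCode

variable {ι α L : Type*} {σ : ι → List α} {R : ι → ι → Prop} {ℓ : ι → L} {m : ℕ}

theorem ne_nil (C : IsSquareFreeCode σ R ℓ m) (d : ι) : σ d ≠ [] :=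
  List.ne_nil_of_length_pos (C.pos.trans_le (C.le_length d))

theorem eq_of_infix (C : IsSquareFreeCode σ R ℓ m) {d e : ι} (h : σ d <:+: σ e) : d = e := by
  obtain ⟨a, b, hab⟩ := h
  obtain ⟨f, hf⟩ := C.exists_rel e
  refine (C.marker d e f hf a.length ?_ ?_).2.symm
  · have := List.length_pos_of_ne_nil (C.ne_nil d)
    simp only [← hab, List.length_append]
    omega
  · rw [← hab, List.append_assoc, List.append_assoc, List.drop_left]
    exact (List.take_prefix _ _).trans (List.prefix_append _ _)

theorem isPrefixCode (C : IsSquareFreeCode σ R ℓ m) : IsPrefixCode σ :=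
  ⟨C.ne_nil, fun _ _ h => C.eq_of_infix h.isInfix⟩

theorem isSuffixCode (C : IsSquareFreeCode σ R ℓ m) : IsSuffixCode σ :=
  ⟨fun d => List.reverse_ne_nil_iff.2 (C.ne_nil d),
    fun _ _ h => C.eq_of_infix (List.reverse_prefix.1 h).isInfix⟩

theorem length_marker (C : IsSquareFreeCode σ R ℓ m) (d : ι) : ((σ d).take m).length = m :=
  List.length_take_of_le (C.le_length d)

theorem marker_ne_nil (C : IsSquareFreeCode σ R ℓ m) (d : ι) : (σ d).take m ≠ [] :=
  List.ne_nil_of_length_pos ((C.length_marker d).symm ▸ C.pos)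

theorem exists_prefix_of_square_infix (C : IsSquareFreeCode σ R ℓ m) {t : List ι}
    (ht : t.IsChain R) {u : List α} (hu : u ≠ []) (h : u ++ u <:+: t.flatMap σ) :
    ∃ b e f W, u ++ u <+: b ++ (σ e ++ (σ f ++ W)) ∧
      (b ++ σ e ++ σ f).length < (u ++ u).length := by
  obtain ⟨X, Y, hXY⟩ := h
  rw [List.append_assoc] at hXY
  have htne : t ≠ [] := by
    rintro rfl
    simp_all
  obtain ⟨t₁, d, t₂, a, b, rfl, hd, -, hb⟩ := exists_split_of_flatMap_eq_append htne hXY.symm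
  obtain ⟨e, f, W, hde, hef, hW⟩ := exists_rel_rel_flatMap_prefix (σ := σ) C.exists_rel
    (List.isChain_append.1 ht).2.1
  have hpre : u ++ u <+: b ++ (σ e ++ (σ f ++ W)) :=
    (hb ▸ List.prefix_append _ _).trans ((List.prefix_append_right_inj _).2 (by simpa using hW))
  refine ⟨b, e, f, W, hpre, ?_⟩
  by_contra! hle
  refine C.sqFree d e f hde hef u hu (List.IsInfix.trans (l₂ := b ++ σ e ++ σ f) ?_ ?_)
  · exact (List.prefix_of_prefix_length_le hpre ⟨W, by simp⟩ hle).isInfix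
  · exact ⟨a, [], by simp [hd]⟩

theorem exists_marker_infix (C : IsSquareFreeCode σ R ℓ m) {t : List ι} (ht : t.IsChain R)
    {u : List α} (hu : u ≠ []) (h : u ++ u <:+: t.flatMap σ) : ∃ d, (σ d).take m <:+: u := by
  obtain ⟨b, e, f, W, hpre, hlong⟩ := C.exists_prefix_of_square_infix ht hu h
  have hprefix := (List.prefix_append u u).trans hpre
  have he := C.le_length e
  have hf := C.le_length f
  simp only [List.length_append] at hlong
  by_cases hbu : b.length + m ≤ u.length
  · exact ⟨e, take_infix_of_prefix_append hprefix hbu⟩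
  · obtain ⟨g, hg⟩ : u <+: b ++ σ e := List.prefix_of_prefix_length_le hprefix ⟨σ f ++ W, by simp⟩
      (by simp only [List.length_append]; omega)
    rw [← List.append_assoc, ← hg, List.append_assoc, List.prefix_append_right_inj] at hpre
    refine ⟨f, take_infix_of_prefix_append hpre ?_⟩
    have := congrArg List.length hg
    simp only [List.length_append] at this
    omega

/-- If `(δ ++ γ) ++ (δ ++ γ)` is a square in a coded word and both halves are split at the
beginnings of equal code words, then `v` is the part that codes `γ ++ δ` in the middle. -/
theorem not_sqFree_map_of_flatMap_eq_append (C : IsSquareFreeCode σ R ℓ m) {v r s : List ι}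
    (hv : v ≠ []) {γ δ : List α} (h : v.flatMap σ = γ ++ δ) (hγ : γ <+: r.flatMap σ)
    (hδ : δ <:+ s.flatMap σ) : ¬ SqFree ((s ++ v ++ r).map ℓ) := by
  obtain ⟨z, d, y, a, b, rfl, hd, rfl, rfl⟩ := exists_split_of_flatMap_eq_append hv h
  obtain ⟨r, rfl, ha⟩ := C.isPrefixCode.exists_append_of_prefix hγ
  obtain ⟨s, rfl, hb⟩ := C.isSuffixCode.exists_append_of_suffix hδ
  have had : a <+: σ d := hd ▸ List.prefix_append _ _
  have hbd : b <:+ σ d := hd ▸ List.suffix_append _ _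
  have key : (∃ f r', r = f :: r' ∧ ℓ d = ℓ f) ∨ ∃ f s', s = s' ++ [f] ∧ ℓ d = ℓ f := by
    rcases eq_or_ne a [] with rfl | ha'
    · obtain rfl : σ d = b := hd
      obtain ⟨f, s', rfl, hf⟩ := C.isSuffixCode.exists_concat_of_suffix (C.ne_nil d) hbd hb
      exact Or.inr ⟨f, s', rfl, congrArg ℓ (C.eq_of_infix hf.isInfix)⟩
    obtain ⟨f, r', rfl, hf⟩ := C.isPrefixCode.exists_cons_of_prefix ha' had ha
    rcases eq_or_ne b [] with rfl | hb'
    · obtain rfl : σ d = a := by simpa using hd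
      exact Or.inl ⟨f, r', rfl, congrArg ℓ (C.eq_of_infix hf.isInfix)⟩
    obtain ⟨f', s', rfl, hf'⟩ := C.isSuffixCode.exists_concat_of_suffix hb' hbd hb
    exact (C.letter_eq d f f' a b hd hf hf').imp (fun h => ⟨f, r', rfl, h⟩)
      fun h => ⟨f', s', rfl, h⟩
  intro hsq
  rcases key with ⟨f, r', rfl, hℓ⟩ | ⟨f, s', rfl, hℓ⟩
  · exact hsq ((y ++ z ++ [d]).map ℓ) (by simp) ⟨s.map ℓ, r'.map ℓ, by simp [hℓ]⟩
  · exact hsq ((f :: y ++ z).map ℓ) (by simp) ⟨s'.map ℓ, r.map ℓ, by simp [hℓ]⟩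

theorem exists_eq_append_of_marker (C : IsSquareFreeCode σ R ℓ m) {t : List ι}
    (ht : t.IsChain R) {d : ι} {X Y : List α} (h : t.flatMap σ = X ++ ((σ d).take m ++ Y)) :
    ∃ t₁ t₂, t = t₁ ++ d :: t₂ ∧ t₁.flatMap σ = X ∧
      (d :: t₂).flatMap σ = (σ d).take m ++ Y := by
  obtain ⟨t₁, t₂, rfl, rfl⟩ := (C.marker d).exists_eq_append C.exists_rel
    (fun e => (C.length_marker d).trans_le (C.le_length e)) (C.marker_ne_nil d) ht h
  simp only [List.take_zero, List.append_nil, List.flatMap_append, List.append_cancel_left_eq] at h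
  exact ⟨t₁, t₂, rfl, by simp, h⟩

theorem not_sqFree_map_of_marker_infix (C : IsSquareFreeCode σ R ℓ m) {t : List ι}
    (ht : t.IsChain R) {d : ι} {u : List α} (hd : (σ d).take m <:+: u)
    (hu : u ++ u <:+: t.flatMap σ) : ¬ SqFree (t.map ℓ) := by
  obtain ⟨x, y, rfl⟩ := hd
  obtain ⟨X, Y, hXY⟩ := hu
  obtain ⟨s, r, hsr, hs, -⟩ := C.exists_eq_append_of_marker ht (d := d) (X := X ++ x)
    (Y := y ++ x ++ (σ d).take m ++ y ++ Y) (by simp [← hXY])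
  obtain ⟨w, r, rfl, hw, hr⟩ := C.exists_eq_append_of_marker ht (d := d)
    (X := X ++ x ++ (σ d).take m ++ y ++ x) (Y := y ++ Y) (by simp [← hXY])
  have hsw : s.flatMap σ ++ ((σ d).take m ++ y ++ x) <+: w.flatMap σ := by simp [hs, hw]
  obtain ⟨v, rfl, -⟩ := C.isPrefixCode.exists_append_of_prefix hsw
  have hv : v.flatMap σ = (σ d).take m ++ y ++ x := by
    simpa [hs] using hw
  have hvne : v ≠ [] := by
    rintro rfl
    simp [C.marker_ne_nil d] at hv
  exact C.not_sqFree_map_of_flatMap_eq_append hvne hv ⟨Y, by simp [hr]⟩ ⟨X, hs.symm⟩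

theorem sqFree_flatMap (C : IsSquareFreeCode σ R ℓ m) {t : List ι} (ht : t.IsChain R)
    (hsq : SqFree (t.map ℓ)) : SqFree (t.flatMap σ) := by
  intro u hu huu
  obtain ⟨d, hd⟩ := C.exists_marker_infix ht hu huu
  exact C.not_sqFree_map_of_marker_infix ht hd huu hsq

end IsSquareFreeCode

/-! ### The substitution `h` -/

/-- The code words used to build nice words: `some (c, l)` is the shorter (`l = false`) or the
longer (`l = true`) element of `himg c`, and `none` is a sentinel coded by `pal`. -/
abbrev Block := Option (Fin 3 × Bool)

namespace Block

/-- The word over `Fin 3` coded by a block. The elements of `himg c` are obtained from those of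
`himg 0` by adding `c` to every letter. -/
def word : Block → List (Fin 3)
  | none => pal
  | some (c, false) => [0,1,2,1,0,2,1,2,0,2,1,0,2,0,1,0,2,1,2,0,1,2,1,0].map (· + c)
  | some (c, true) => [0,1,2,1,0,2,1,2,0,2,1,0,2,0,1,2,0,2,1,2,0,1,2,1,0].map (· + c)

/-- The letter that a block codes; the sentinel is the additional letter `none`. -/
def letter : Block → Option (Fin 3) := Option.map Prod.fst

/-- Decides that the letters `a` and `b` may be adjacent in a square-free word in which every
sentinel has the neighbours `0` and no others. -/
def canFollow : Option (Fin 3) → Option (Fin 3) → Bool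
  | none, none => false
  | none, some b => b = 0
  | some a, none => a = 0
  | some a, some b => a ≠ b

/-- The adjacency relation on blocks that is induced by their letters. -/
def Adj (d e : Block) : Prop := canFollow d.letter e.letter

instance : DecidableRel Adj := fun _ _ => inferInstanceAs (Decidable (_ = true))

theorem occursOnlyAt_take_word :
    ∀ d : Block, OccursOnlyAt word Adj (d.word.take 19) 0 d := by
  unfold OccursOnlyAt
  decide +kernel

theorem occursOnlyAt_phat : OccursOnlyAt word Adj phat 20 none := by
  unfold OccursOnlyAt
  decide +kernel

theorem occursOnlyAt_reverse_phat : OccursOnlyAt word Adj phat.reverse 0 none := by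
  unfold OccursOnlyAt
  decide +kernel

theorem letter_eq_of_take_prefix_of_drop_suffix : ∀ d f f' : Block, ∀ o ≤ d.word.length,
    d.word.take o <+: f.word → d.word.drop o <:+ f'.word →
      d.letter = f.letter ∨ d.letter = f'.letter := by
  decide +kernel

theorem noSquareStart_word : ∀ d : Block, noSquareStart d.word [] ∧
    ∀ e, Adj d e → noSquareStart d.word e.word ∧
      ∀ f, Adj e f → noSquareStart d.word (e.word ++ f.word) := by
  decide +kernel

theorem sqFree_word_append_append {d e f : Block} (hde : Adj d e) (hef : Adj e f) :
    SqFree (d.word ++ e.word ++ f.word) := by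
  have hf : SqFree f.word := by
    have hnil : SqFree ([] : List (Fin 3)) := fun u hu h => hu (by simpa using h)
    simpa using hnil.append_of_noSquareStart (noSquareStart_word f).1
  have hef' : SqFree (e.word ++ f.word) :=
    .append_of_noSquareStart ((noSquareStart_word e).2 f hef).1 hf
  rw [List.append_assoc]
  exact .append_of_noSquareStart (((noSquareStart_word d).2 e hde).2 f hef) hef'

theorem exists_adj : ∀ d : Block, ∃ e, Adj d e := by
  decide

theorem length_phat_le : ∀ d : Block, phat.length ≤ d.word.length := by
  decide

theorem isSquareFreeCode : IsSquareFreeCode word Adj letter 19 where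
  exists_rel := exists_adj
  pos := by simp
  le_length := length_phat_le
  marker := occursOnlyAt_take_word
  letter_eq d f f' a b hd hf hf' := by
    refine letter_eq_of_take_prefix_of_drop_suffix d f f' a.length ?_ ?_ ?_ <;> simp [hd, hf, hf']
  sqFree _ _ _ := sqFree_word_append_append

end Block

/-- The square-free words whose first and last letter is `0`. These are the words that may be
enclosed by sentinels before they are coded. -/
structure IsCodable (w : List (Fin 3)) : Prop where
  sqFree : SqFree w
  head? : w.head? = some 0
  getLast? : w.getLast? = some 0

namespace IsCodable

variable {w : List (Fin 3)}

theorem ne_nil (hw : IsCodable w) : w ≠ [] := by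
  rintro rfl
  simpa using hw.head?

theorem isChain_canFollow (hw : IsCodable w) :
    (none :: w.map some ++ [none]).IsChain (Block.canFollow · ·) := by
  have hmap : (w.map some).IsChain (Block.canFollow · ·) := by
    rw [List.isChain_map]
    exact hw.sqFree.isChain_ne.imp fun a b hab => by simpa [Block.canFollow] using hab
  have h0 : Block.canFollow none (some 0) ∧ Block.canFollow (some 0) none := ⟨rfl, rfl⟩
  simp [List.isChain_append, List.isChain_cons, hmap, hw.head?, hw.getLast?, h0]

theorem sqFree_cons_concat (hw : IsCodable w) : SqFree (none :: w.map some ++ [none]) :=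
  (hw.sqFree.map (Option.some_injective _)).cons_concat (by simp [hw.ne_nil]) (by simp)

theorem isNice_flatMap (hw : IsCodable w) {t : List Block}
    (ht : t.map Block.letter = w.map some) : IsNice (t.flatMap Block.word) := by
  have hletters : (none :: t ++ [none]).map Block.letter = none :: w.map some ++ [none] := by
    simp only [List.cons_append, List.map_cons, List.map_append, ht]
    rfl
  have hchain : (none :: t ++ [none]).IsChain Block.Adj :=
    (List.isChain_map Block.letter).1 (hletters ▸ hw.isChain_canFollow)
  have hcount : (none :: t ++ [none]).count none = 2 := by
    have hnone : none ∉ t := by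
      intro h
      have : none ∈ w.map some := ht ▸ List.mem_map_of_mem (f := Block.letter) h
      simp at this
    simp [List.count_eq_zero_of_not_mem hnone]
  have hpal : pal ++ t.flatMap Block.word ++ pal = (none :: t ++ [none]).flatMap Block.word := by
    simp [Block.word]
  rw [IsNice, hpal, ← hcount]
  refine ⟨Block.isSquareFreeCode.sqFree_flatMap hchain (hletters ▸ hw.sqFree_cons_concat), ?_, ?_⟩
  · exact occCount_flatMap Block.occursOnlyAt_phat Block.exists_adj Block.length_phat_le
      (by decide) (by decide) hchain
  · exact occCount_flatMap Block.occursOnlyAt_reverse_phat Block.exists_adj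
      (by simpa using Block.length_phat_le) (by decide) (by decide) hchain

end IsCodable

/-- The blocks that code `w`, using the longer code word exactly at the positions in `s`. -/
def encode (w : List (Fin 3)) (s : Finset (Fin w.length)) : List Block :=
  List.ofFn fun i => some (w.get i, decide (i ∈ s))

theorem map_letter_encode (w : List (Fin 3)) (s : Finset (Fin w.length)) :
    (encode w s).map Block.letter = w.map some := by
  conv_rhs => rw [← List.ofFn_get w]
  simp only [encode, List.map_ofFn]
  rfl

theorem encode_injective (w : List (Fin 3)) : Function.Injective (encode w) := by
  intro s s' h
  ext i
  have := congrFun (List.ofFn_injective h) i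
  simpa using this

theorem Block.length_word_some (c : Fin 3) (l : Bool) :
    (Block.word (some (c, l))).length = 24 + if l then 1 else 0 := by
  cases l <;> simp [Block.word]

theorem length_flatMap_encode (w : List (Fin 3)) (s : Finset (Fin w.length)) :
    ((encode w s).flatMap Block.word).length = 24 * w.length + s.card := by
  simp only [encode, List.length_flatMap, List.map_ofFn, List.sum_ofFn, Function.comp_apply,
    Block.length_word_some, decide_eq_true_eq, Finset.sum_add_distrib, Finset.sum_const,
    Finset.card_univ, Fintype.card_fin, smul_eq_mul, Finset.sum_boole, Finset.filter_mem_eq_inter,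
    Finset.univ_inter, Nat.cast_id, mul_comm]

/-! ### Counting nice words -/

/-- The set `N_n` of nice words of length `n`. -/
def niceWords (n : ℕ) : Set (List (Fin 3)) := {w | IsNice w ∧ w.length = n}

theorem IsCodable.choose_le_ncard_niceWords {w : List (Fin 3)} (hw : IsCodable w) (k : ℕ) :
    w.length.choose k ≤ (niceWords (24 * w.length + k)).ncard := by
  let code (s : Finset (Fin w.length)) : List (Fin 3) := (encode w s).flatMap Block.word
  have hcode : Function.Injective code :=
    Block.isSquareFreeCode.isPrefixCode.flatMap_injective.comp (encode_injective w)
  have hfinite : (niceWords (24 * w.length + k)).Finite :=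
    (List.finite_length_eq (Fin 3) _).subset fun _ h => h.2
  calc w.length.choose k = ((Finset.univ : Finset (Fin w.length)).powersetCard k).card := by
        rw [Finset.card_powersetCard, Finset.card_univ, Fintype.card_fin]
    _ = (code '' ↑((Finset.univ : Finset (Fin w.length)).powersetCard k)).ncard := by
        rw [Set.ncard_image_of_injective _ hcode, Set.ncard_coe_finset]
    _ ≤ (niceWords (24 * w.length + k)).ncard := by
        refine Set.ncard_le_ncard ?_ hfinite
        rintro _ ⟨s, hs, rfl⟩
        refine ⟨hw.isNice_flatMap (map_letter_encode w s), ?_⟩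
        rw [length_flatMap_encode, (Finset.mem_powersetCard.1 hs).2]

theorem IsCodable.exists_length_eq {w : List (Fin 3)} (hw : IsCodable w) :
    ∃ v, IsCodable v ∧ v.length = 24 * w.length := by
  let t : List Block := w.map fun c => some (c, false)
  have hnice : IsNice (t.flatMap Block.word) := hw.isNice_flatMap (by simp [t, Block.letter])
  refine ⟨t.flatMap Block.word, ⟨hnice.1.of_infix (List.infix_append _ _ _), ?_, ?_⟩, ?_⟩
  · obtain ⟨w', rfl⟩ := List.head?_eq_some_iff.1 hw.head?
    simp [t, Block.word]
  · obtain ⟨w', rfl⟩ := List.getLast?_eq_some_iff.1 hw.getLast?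
    simp [t, Block.word]
  · simp [t, List.length_flatMap, Function.comp_def, Block.length_word_some, mul_comm]

theorem exists_isCodable_length_ge (n : ℕ) : ∃ w, IsCodable w ∧ n ≤ w.length := by
  induction n with
  | zero => exact ⟨[0], ⟨.singleton 0, rfl, rfl⟩, Nat.zero_le _⟩
  | succ n ih =>
    obtain ⟨w, hw, hn⟩ := ih
    obtain ⟨v, hv, hvw⟩ := hw.exists_length_eq
    have := List.length_pos_of_ne_nil hw.ne_nil
    exact ⟨v, hv, by omega⟩

theorem SqFree.exists_isCodable {w : List (Fin 3)} (hw : SqFree w) (hhead : w.head? = some 0) :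
    ∃ v, IsCodable v ∧ v.length ≤ w.length ∧ w.length ≤ v.length + 3 := by
  obtain ⟨s, p, hsp, hs⟩ : ∃ s p, w.reverse = s ++ 0 :: p ∧ 0 ∉ s :=
    List.eq_append_cons_of_mem (List.mem_reverse.2 (List.mem_of_head? hhead))
  obtain rfl : w = (p.reverse ++ [0]) ++ s.reverse := by
    simpa using congrArg List.reverse hsp
  have hs3 : s.reverse.length ≤ 3 :=
    (hw.of_infix (List.suffix_append _ _).isInfix).length_le_three (by simpa using hs)
  refine ⟨p.reverse ++ [0], ⟨hw.of_infix (List.prefix_append _ _).isInfix, ?_, by simp⟩, ?_⟩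
  · simpa [List.head?_append] using hhead
  · simp only [List.length_append]
    omega

theorem exists_isCodable_length_mem_Icc (n : ℕ) :
    ∃ w, IsCodable w ∧ w.length ∈ Set.Icc n (n + 3) := by
  obtain ⟨w, hw, hn⟩ := exists_isCodable_length_ge (n + 3)
  have hsq : SqFree (w.take (n + 3)) := hw.sqFree.of_infix (List.take_prefix _ _).isInfix
  have hhead : (w.take (n + 3)).head? = some 0 := by
    rw [List.head?_take, if_neg (by omega), hw.head?]
  obtain ⟨v, hv, hvw, hwv⟩ := hsq.exists_isCodable hhead
  rw [List.length_take_of_le hn] at hvw hwv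
  exact ⟨v, hv, by omega, hvw⟩

theorem two_pow_le_choose_add {q a b : ℕ} (ha : q ≤ a) (hb : q ≤ b) :
    2 ^ q ≤ (a + b).choose a := by
  induction q generalizing a b with
  | zero => exact Nat.choose_pos (Nat.le_add_right a b)
  | succ q ih =>
    obtain ⟨a, rfl⟩ := Nat.exists_eq_add_of_le' (Nat.one_le_of_lt ha)
    obtain ⟨b, rfl⟩ := Nat.exists_eq_add_of_le' (Nat.one_le_of_lt hb)
    have h₁ := ih (a := a) (b := b + 1) (by omega) (by omega)
    have h₂ := ih (a := a + 1) (b := b) (by omega) (by omega)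
    calc 2 ^ (q + 1) = 2 ^ q + 2 ^ q := by ring
      _ ≤ (a + (b + 1)).choose a + (a + 1 + b).choose (a + 1) := add_le_add h₁ h₂
      _ = (a + 1 + (b + 1)).choose (a + 1) := by
        rw [show a + 1 + b = a + (b + 1) by omega, show a + 1 + (b + 1) = a + (b + 1) + 1 by omega,
          Nat.choose_succ_succ]

theorem two_pow_le_ncard_niceWords {n q : ℕ} (h : 49 * (q + 50) ≤ n) :
    2 ^ q ≤ (niceWords n).ncard := by
  obtain ⟨w, hw, hlow, hhigh⟩ := exists_isCodable_length_mem_Icc (2 * n / 49 - 1)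
  obtain ⟨k, rfl⟩ := Nat.exists_eq_add_of_le (show 24 * w.length ≤ n by omega)
  obtain ⟨l, hl⟩ := Nat.exists_eq_add_of_le (show k ≤ w.length by omega)
  calc 2 ^ q ≤ (k + l).choose k := two_pow_le_choose_add (by omega) (by omega)
    _ ≤ (niceWords (24 * w.length + k)).ncard := hl ▸ hw.choose_le_ncard_niceWords k

theorem pow_le_two_pow {q : ℕ} (hq : 128 ≤ q) : (1.01 : ℝ) ^ (49 * (q + 51)) ≤ 2 ^ q := by
  have hbase : (1.01 : ℝ) ^ 49 ≤ 1.63 := by norm_num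
  rw [pow_mul]
  calc ((1.01 : ℝ) ^ 49) ^ (q + 51) ≤ 1.63 ^ (q + 51) := by gcongr
    _ ≤ 2 ^ q := by
      induction q, hq using Nat.le_induction with
      | base => norm_num
      | succ q _ ih =>
        rw [Nat.add_right_comm, pow_succ, pow_succ (2 : ℝ)]
        exact mul_le_mul ih (by norm_num) (by norm_num) (by positivity)

/-- For every `n > 8750`, the number of nice words of length `n` is greater
than `1.01 ^ n / 7.8`. -/
theorem nice_count_lower_bound (n : ℕ) (hn : 8750 < n) :
    (1.01 : ℝ) ^ n / 7.8 <
      ({w : List (Fin 3) | IsNice w ∧ w.length = n}.ncard : ℝ) := by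
  obtain ⟨q, hq, hqn, hnq⟩ : ∃ q, 128 ≤ q ∧ 49 * (q + 50) ≤ n ∧ n ≤ 49 * (q + 51) :=
    ⟨n / 49 - 50, by omega, by omega, by omega⟩
  calc (1.01 : ℝ) ^ n / 7.8 < 1.01 ^ n := div_lt_self (by positivity) (by norm_num)
    _ ≤ 1.01 ^ (49 * (q + 51)) := pow_le_pow_right₀ (by norm_num) hnq
    _ ≤ 2 ^ q := pow_le_two_pow hq
    _ ≤ (niceWords n).ncard := mod_cast two_pow_le_ncard_niceWords hqn
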